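/- Let E be a homogeneous effect algebra. Then E is the union of its blocks: every element of E belongs to some block of E. -/

import Mathlib

/-- An effect algebra: a partial commutative, associative operation `oplus`
(with definedness encoded via `Option`), constants `zero` and `one`,
unique orthosupplements, and `a ⊕ 1` defined only for `a = 0`. -/
structure EffectAlgebra (E : Type*) where
  oplus : E → E → Option E
  zero : E
  one : E
  comm : ∀ a b, oplus a b = oplus b a
  assoc : ∀ a b c ab abc, oplus a b = some ab → oplus ab c = some abc →
    ∃ bc, oplus b c = some bc ∧ oplus a bc = some abc
  compl_exists : ∀ a, ∃ b, oplus a b = some one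
  compl_unique : ∀ a b c, oplus a b = some one → oplus a c = some one → b = c
  add_one : ∀ a b, oplus a one = some b → a = zero

namespace EffectAlgebra

variable {E : Type*} (A : EffectAlgebra E)

/-- `a ⊥ b` : the sum `a ⊕ b` is defined. -/
def Perp (a b : E) : Prop := (A.oplus a b).isSome

/-- `a ≤ b` iff `b = a ⊕ c` for some `c`. -/
def le (a b : E) : Prop := ∃ c, A.oplus a c = some b

/-- The orthosupplement `a'`: the unique `b` with `a ⊕ b = 1`. -/
noncomputable def compl (a : E) : E :=
  @Classical.epsilon E ⟨A.zero⟩ fun b => A.oplus a b = some A.one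

/-- `a ⊖ b` : the unique `c` with `b ⊕ c = a` (defined when `b ≤ a`). -/
noncomputable def ominus (a b : E) : E :=
  @Classical.epsilon E ⟨A.zero⟩ fun c => A.oplus b c = some a

/-- Homogeneity. -/
def Homogeneous : Prop :=
  ∀ u v₁ v₂ s, A.oplus v₁ v₂ = some s → A.le u s → A.le u (A.compl s) →
    ∃ u₁ u₂, A.le u₁ v₁ ∧ A.le u₂ v₂ ∧ A.oplus u₁ u₂ = some u

/-- Riesz decomposition property. -/
def RDP : Prop :=
  ∀ u v₁ v₂ s, A.oplus v₁ v₂ = some s → A.le u s →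
    ∃ u₁ u₂, A.le u₁ v₁ ∧ A.le u₂ v₂ ∧ A.oplus u₁ u₂ = some u

/-- The sum `c₁ ⊕ … ⊕ cₙ` of a finite family (a list); `some s` iff the family
is orthogonal with sum `s`. -/
def sumList : List E → Option E
  | [] => some A.zero
  | x :: xs => (sumList xs).bind fun s => A.oplus x s

/-- The subfamily of `C` indexed by a set of indices `S ⊆ {1,…,n}`. -/
def pickList (C : List E) (S : Finset (Fin C.length)) : List E :=
  (S.sort (· ≤ ·)).map C.get

/-- `C` is an orthogonal cover of `M`. -/
def IsCoverOf (C : List E) (M : Set E) : Prop :=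
  (A.sumList C).isSome ∧
    ∀ a ∈ M, ∃ S : Finset (Fin C.length), A.sumList (pickList C S) = some a

/-- `M` is compatible with covers in `X`: every finite subset of `M` has an
orthogonal cover with range contained in `X`. -/
def CompatWithCoversIn (M X : Set E) : Prop :=
  ∀ F : Finset E, ↑F ⊆ M →
    ∃ C : List E, (∀ c ∈ C, c ∈ X) ∧ A.IsCoverOf C ↑F

/-- `M` is compatible (with covers in `E`). -/
def Compatible (M : Set E) : Prop := A.CompatWithCoversIn M Set.univ

/-- `M` is internally compatible. -/
def InternallyCompatible (M : Set E) : Prop := A.CompatWithCoversIn M M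

/-- `D` is a refinement of `C`: a partition `{P i}` of the index set of `D`
with `C i = ⊕_{j ∈ P i} D j`. -/
def IsRefinement (D C : List E) : Prop :=
  ∃ P : Fin C.length → Finset (Fin D.length),
    (∀ i j, i ≠ j → Disjoint (P i) (P j)) ∧
    (∀ k, ∃ i, k ∈ P i) ∧
    (∀ i, A.sumList (pickList D (P i)) = some (C.get i))

/-- One step of the closure construction `M ↦ M₁`. -/
def closureStep (M : Set E) : Set E :=
  {x | ∃ y ∈ M, A.le x y ∧ A.le x (A.compl y)} ∪
  {z | ∃ y ∈ M, ∃ x, A.le x y ∧ A.le x (A.compl y) ∧ A.oplus x z = some y}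

/-- The sets `Mₙ`. -/
def closureSeq (M : Set E) (n : ℕ) : Set E := (A.closureStep)^[n] M

/-- The closure `M̄ = ⋃ₙ Mₙ`. -/
def closure (M : Set E) : Set E := ⋃ n, A.closureSeq M n

/-- `B` is a sub-effect algebra of `E`. -/
def IsSubEA (B : Set E) : Prop :=
  A.one ∈ B ∧ ∀ a ∈ B, ∀ b ∈ B, A.le b a → A.ominus a b ∈ B

/-- The Riesz decomposition property for (the effect algebra on) a subset `B`. -/
def RDPOn (B : Set E) : Prop :=
  ∀ u v₁ v₂ s, u ∈ B → v₁ ∈ B → v₂ ∈ B → A.oplus v₁ v₂ = some s → A.le u s →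
    ∃ u₁ u₂, u₁ ∈ B ∧ u₂ ∈ B ∧ A.le u₁ v₁ ∧ A.le u₂ v₂ ∧ A.oplus u₁ u₂ = some u

/-- Homogeneity for (the effect algebra on) a subset `B`. -/
def HomogeneousOn (B : Set E) : Prop :=
  ∀ u v₁ v₂ s, u ∈ B → v₁ ∈ B → v₂ ∈ B → A.oplus v₁ v₂ = some s →
    A.le u s → A.le u (A.compl s) →
    ∃ u₁ u₂, u₁ ∈ B ∧ u₂ ∈ B ∧ A.le u₁ v₁ ∧ A.le u₂ v₂ ∧ A.oplus u₁ u₂ = some u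

/-- A block: a maximal sub-effect algebra satisfying the Riesz decomposition
property. -/
def IsBlock (B : Set E) : Prop :=
  A.IsSubEA B ∧ A.RDPOn B ∧
    ∀ B', A.IsSubEA B' → A.RDPOn B' → B ⊆ B' → B' = B

/-- A block of the sub-effect algebra on `F`: a maximal sub-effect algebra of
`F` satisfying the Riesz decomposition property. -/
def IsBlockIn (F B : Set E) : Prop :=
  B ⊆ F ∧ A.IsSubEA B ∧ A.RDPOn B ∧
    ∀ B', B' ⊆ F → A.IsSubEA B' → A.RDPOn B' → B ⊆ B' → B' = B

/-- `a` is sharp: the infimum `a ∧ a'` exists and equals `0`, i.e. every common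
lower bound of `a` and `a'` is `0`. -/
def Sharp (a : E) : Prop :=
  ∀ b, A.le b a → A.le b (A.compl a) → b = A.zero

/-- `a` is sharp in the sub-effect algebra on `F`. -/
def SharpIn (F : Set E) (a : E) : Prop :=
  a ∈ F ∧ ∀ b ∈ F, A.le b a → A.le b (A.compl a) → b = A.zero

/-- `a` is principal. -/
def Principal (a : E) : Prop :=
  ∀ x y s, A.le x a → A.le y a → A.oplus x y = some s → A.le s a

/-- `a` is principal in the sub-effect algebra on `B`. -/
def PrincipalIn (B : Set E) (a : E) : Prop :=
  a ∈ B ∧ ∀ x ∈ B, ∀ y ∈ B, ∀ s, A.le x a → A.le y a →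
    A.oplus x y = some s → A.le s a

/-- `a` is central: principal, and every `b` has a unique decomposition
`b = b₁ ⊕ b₂` with `b₁ ≤ a`, `b₂ ≤ a'`. -/
def Central (a : E) : Prop :=
  A.Principal a ∧ ∀ b, ∃! p : E × E,
    A.le p.1 a ∧ A.le p.2 (A.compl a) ∧ A.oplus p.1 p.2 = some b

/-- `a` is central in the sub-effect algebra on `B`. -/
def CentralIn (B : Set E) (a : E) : Prop :=
  A.PrincipalIn B a ∧ ∀ b ∈ B, ∃! p : E × E,
    p.1 ∈ B ∧ p.2 ∈ B ∧ A.le p.1 a ∧ A.le p.2 (A.compl a) ∧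
      A.oplus p.1 p.2 = some b

/-- The center `C(E)`. -/
def center : Set E := {a | A.Central a}

/-- The compatibility center `K(E)`: the intersection of all blocks. -/
def compatCenter : Set E := {x | ∀ B, A.IsBlock B → x ∈ B}

end EffectAlgebra

/-!
Sums are taken in the commutative monoid `A.Ext` obtained by adjoining to `E` an absorbing
element for undefined sums; it is cancellative as long as sums stay defined.

Homogeneity extends by induction from two summands to a finite orthogonal family `c`: an element
below both `∑ c` and its orthosupplement splits along the members of `c`, and the pieces lie in
every set that contains the members of `c` and is closed under `closureStep`. By Zorn's lemma there
is a maximal `M ∋ x, x', 1` that is compatible with covers in its own closure. If `b ≤ a` are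
partial sums of one orthogonal family, cancelling their common summands leaves orthogonal
remainders, so the splitting applies to them and yields a cover in which `b` uses only summands of
`a`. Maximality now forces `M` to be closed under `⊖` and under `closureStep`, so its covers lie in
`M`, and the same refinement gives the Riesz decomposition property. A second use of Zorn's lemma
enlarges `M` to a block.
-/

namespace EffectAlgebra

variable {E : Type*} {A : EffectAlgebra E}

theorem oplus_zero (A : EffectAlgebra E) (a : E) : A.oplus a A.zero = some a := by
  have one_oplus_zero : A.oplus A.one A.zero = some A.one := by
    obtain ⟨b, hb⟩ := A.compl_exists A.one
    rwa [A.add_one b A.one (by rwa [A.comm])] at hb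
  obtain ⟨b, hb⟩ := A.compl_exists a
  rw [A.comm] at hb
  obtain ⟨c, hac, hbc⟩ := A.assoc b a A.zero A.one A.one hb one_oplus_zero
  rw [hac, A.compl_unique b c a hbc hb]

/-- The total commutative monoid extending the partial monoid `E` by an absorbing element `none`,
the value of all undefined sums. It makes `Finset` sums available for orthogonal families. -/
def Ext (_A : EffectAlgebra E) := Option E

/-- The inclusion of an effect algebra into its total extension. -/
def of (A : EffectAlgebra E) (a : E) : A.Ext := some a

/-- An element of the total extension is defined if it comes from the effect algebra. -/
def Ext.Defined (x : A.Ext) : Prop := ∃ a, A.of a = x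

namespace Ext

instance : Zero A.Ext := ⟨A.of A.zero⟩

instance : Add A.Ext := ⟨fun x y => Option.bind x fun a => Option.bind y (A.oplus a)⟩

protected theorem add_comm (x y : A.Ext) : x + y = y + x := by
  cases x <;> cases y <;> first | rfl | exact A.comm _ _

protected theorem add_assoc (x y z : A.Ext) : x + y + z = x + (y + z) := by
  have of_left {x y z : A.Ext} {s : E} (h : x + y + z = A.of s) : x + (y + z) = A.of s := by
    obtain ⟨ab, hxy, habz⟩ := Option.bind_eq_some_iff.mp h
    obtain ⟨a, rfl, hay⟩ := Option.bind_eq_some_iff.mp hxy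
    obtain ⟨b, rfl, hab⟩ := Option.bind_eq_some_iff.mp hay
    obtain ⟨c, rfl, habc⟩ := Option.bind_eq_some_iff.mp habz
    obtain ⟨bc, hbc, h⟩ := A.assoc a b c ab s hab habc
    exact Option.bind_eq_some_iff.mpr ⟨a, rfl, Option.bind_eq_some_iff.mpr ⟨bc, hbc, h⟩⟩
  refine Option.ext fun s => ⟨of_left, fun h => ?_⟩
  have hrev : z + y + x = A.of s := by rwa [Ext.add_comm z y, Ext.add_comm _ x]
  rw [Ext.add_comm _ z, Ext.add_comm x y]
  exact of_left hrev

protected theorem add_zero (x : A.Ext) : x + 0 = x := by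
  cases x with
  | none => rfl
  | some a => exact A.oplus_zero a

instance : AddCommMonoid A.Ext where
  add_assoc := Ext.add_assoc
  add_comm := Ext.add_comm
  zero_add x := (Ext.add_comm 0 x).trans (Ext.add_zero x)
  add_zero := Ext.add_zero
  nsmul := nsmulRec

end Ext

theorem of_injective : Function.Injective A.of := Option.some_injective E

theorem of_zero : A.of A.zero = 0 := rfl

theorem oplus_eq_some_iff {a b c : E} : A.oplus a b = some c ↔ A.of a + A.of b = A.of c := Iff.rfl

theorem of_add_of_compl (A : EffectAlgebra E) (a : E) :
    A.of a + A.of (A.compl a) = A.of A.one :=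
  Classical.epsilon_spec (A.compl_exists a)

theorem defined_of (a : E) : (A.of a).Defined := ⟨a, rfl⟩

namespace Ext

theorem Defined.of_add_right {x y : A.Ext} (h : (x + y).Defined) : x.Defined := by
  obtain ⟨s, hs⟩ := h
  obtain ⟨a, rfl, -⟩ := Option.bind_eq_some_iff.mp hs.symm
  exact defined_of a

theorem Defined.of_add_left {x y : A.Ext} (h : (x + y).Defined) : y.Defined :=
  Defined.of_add_right (add_comm x y ▸ h)

theorem Defined.sum_of_subset {ι : Type*} {f : ι → A.Ext} {S T : Finset ι}
    (hT : (∑ i ∈ T, f i).Defined) (hST : S ⊆ T) : (∑ i ∈ S, f i).Defined := by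
  classical
  rw [← Finset.sum_sdiff hST] at hT
  exact hT.of_add_left

theorem add_left_cancel_of_defined {x y z : A.Ext} (hdef : (x + y).Defined)
    (h : x + y = x + z) : y = z := by
  obtain ⟨s, hs⟩ := hdef
  have hy : x + A.of (A.compl s) + y = A.of A.one := by
    rw [add_right_comm, ← hs, of_add_of_compl]
  have hz : x + A.of (A.compl s) + z = A.of A.one := by
    rw [add_right_comm, ← h, ← hs, of_add_of_compl]
  have hdef : (x + A.of (A.compl s) + y).Defined := ⟨_, hy.symm⟩
  obtain ⟨t, ht⟩ := hdef.of_add_right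
  obtain ⟨b, rfl⟩ := hdef.of_add_left
  obtain ⟨c, rfl⟩ := Defined.of_add_left ⟨_, hz.symm⟩
  rw [← ht] at hy hz
  rw [A.compl_unique t b c hy hz]

theorem eq_zero_of_add_eq_zero {x y : A.Ext} (h : x + y = 0) : x = 0 := by
  have h1 : x + (y + A.of A.one) = A.of A.one := by rw [← add_assoc, h, zero_add]
  have hdef : (y + A.of A.one).Defined := Defined.of_add_left ⟨_, h1.symm⟩
  obtain ⟨b, rfl⟩ := hdef.of_add_right
  obtain ⟨t, ht⟩ := hdef
  rwa [A.add_one b t ht.symm, of_zero, add_zero] at h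

theorem sum_sdiff_eq_of_sum_add_eq {ι : Type*} [DecidableEq ι] {f : ι → A.Ext} {S T : Finset ι}
    {r : A.Ext} (hST : S ⊆ T) (hT : (∑ i ∈ T, f i).Defined)
    (h : ∑ i ∈ S, f i + r = ∑ i ∈ T, f i) : ∑ i ∈ T \ S, f i = r := by
  refine add_left_cancel_of_defined (x := ∑ i ∈ S, f i) ?_ ?_
  · rwa [add_comm, Finset.sum_sdiff hST]
  · rw [add_comm, Finset.sum_sdiff hST, h]

end Ext

theorem le_of_of_add_eq {a b : E} {x : A.Ext} (h : A.of a + x = A.of b) : A.le a b := by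
  obtain ⟨c, rfl⟩ := Ext.Defined.of_add_left ⟨b, h.symm⟩
  exact ⟨c, h⟩

theorem le_compl_iff_defined {a b : E} : A.le a (A.compl b) ↔ (A.of a + A.of b).Defined := by
  constructor
  · rintro ⟨c, hc⟩
    rw [oplus_eq_some_iff] at hc
    have hb : A.of a + A.of b + A.of c = A.of A.one := by
      rw [add_right_comm, hc, add_comm, of_add_of_compl]
    exact Ext.Defined.of_add_right ⟨_, hb.symm⟩
  · rintro ⟨s, hs⟩
    have hb : A.of b + (A.of a + A.of (A.compl s)) = A.of A.one := by
      rw [← add_assoc, add_comm (A.of b), ← hs, of_add_of_compl]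
    exact le_of_of_add_eq
      (Ext.add_left_cancel_of_defined ⟨_, hb.symm⟩ (hb.trans (A.of_add_of_compl b).symm))

theorem le_of_sum_subset {ι : Type*} {c : ι → E} {S T : Finset ι} {a b : E} (hST : S ⊆ T)
    (hS : ∑ i ∈ S, A.of (c i) = A.of a) (hT : ∑ i ∈ T, A.of (c i) = A.of b) : A.le a b := by
  classical
  refine le_of_of_add_eq (x := ∑ i ∈ T \ S, A.of (c i)) ?_
  rw [← hS, add_comm, Finset.sum_sdiff hST, hT]

theorem ominus_eq {a b d : E} (h : A.of b + A.of d = A.of a) : A.ominus a b = d := by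
  have hspec : A.of b + A.of (A.ominus a b) = A.of a :=
    Classical.epsilon_spec (p := fun c => A.oplus b c = some a) ⟨d, h⟩
  exact of_injective (Ext.add_left_cancel_of_defined ⟨_, hspec.symm⟩ (hspec.trans h.symm))

namespace IsSubEA

variable {B : Set E}

theorem mem_of_add_eq (hB : A.IsSubEA B) {a b d : E} (ha : a ∈ B) (hb : b ∈ B)
    (h : A.of b + A.of d = A.of a) : d ∈ B :=
  ominus_eq h ▸ hB.2 a ha b hb ⟨d, h⟩

theorem zero_mem (hB : A.IsSubEA B) : A.zero ∈ B :=
  hB.mem_of_add_eq hB.1 hB.1 (by rw [of_zero, add_zero])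

theorem add_mem (hB : A.IsSubEA B) {a b s : E} (ha : a ∈ B) (hb : b ∈ B)
    (h : A.of a + A.of b = A.of s) : s ∈ B := by
  have ha' : A.compl a ∈ B := hB.mem_of_add_eq hB.1 ha (A.of_add_of_compl a)
  have hcompl : A.of b + A.of (A.compl s) = A.of (A.compl a) := by
    have hone : A.of a + (A.of b + A.of (A.compl s)) = A.of A.one := by
      rw [← add_assoc, h, of_add_of_compl]
    exact Ext.add_left_cancel_of_defined ⟨_, hone.symm⟩ (hone.trans (A.of_add_of_compl a).symm)
  have hs' : A.compl s ∈ B := hB.mem_of_add_eq ha' hb hcompl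
  exact hB.mem_of_add_eq hB.1 hs' (by rw [add_comm, of_add_of_compl])

theorem sum_mem (hB : A.IsSubEA B) {ι : Type*} {c : ι → E} (hc : ∀ i, c i ∈ B)
    (S : Finset ι) {s : E} (hs : ∑ i ∈ S, A.of (c i) = A.of s) : s ∈ B := by
  classical
  induction S using Finset.induction_on generalizing s with
  | empty =>
    rw [Finset.sum_empty, ← of_zero] at hs
    exact of_injective hs ▸ hB.zero_mem
  | insert i S hi ih =>
    rw [Finset.sum_insert hi] at hs
    obtain ⟨t, ht⟩ := Ext.Defined.of_add_left ⟨s, hs.symm⟩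
    exact hB.add_mem (hc i) (ih ht.symm) (ht ▸ hs)

end IsSubEA

theorem mem_and_mem_of_closureStep_subset {X : Set E} (hX : A.closureStep X ⊆ X) {x y z : E}
    (hy : y ∈ X) (hxz : A.of x + A.of z = A.of y) (hxy : (A.of x + A.of y).Defined) :
    x ∈ X ∧ z ∈ X :=
  have hle : A.le x y := ⟨z, hxz⟩
  have hle_compl : A.le x (A.compl y) := le_compl_iff_defined.mpr hxy
  ⟨hX (.inl ⟨y, hy, hle, hle_compl⟩), hX (.inr ⟨y, hy, x, hle, hle_compl, hxz⟩)⟩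

theorem closureStep_mono : Monotone A.closureStep := by
  rintro M N hMN x (⟨y, hy, h⟩ | ⟨y, hy, h⟩)
  exacts [.inl ⟨y, hMN hy, h⟩, .inr ⟨y, hMN hy, h⟩]

theorem closure_mono : Monotone A.closure := fun _ _ hMN =>
  Set.iUnion_mono fun n => closureStep_mono.iterate n hMN

theorem subset_closure (M : Set E) : M ⊆ A.closure M := Set.subset_iUnion (A.closureSeq M) 0

theorem closureStep_closure_subset (M : Set E) :
    A.closureStep (A.closure M) ⊆ A.closure M := by
  have hstep (n : ℕ) : A.closureStep (A.closureSeq M n) ⊆ A.closure M := by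
    rw [closureSeq, ← Function.iterate_succ_apply' A.closureStep n M]
    exact Set.subset_iUnion (A.closureSeq M) (n + 1)
  rintro x (⟨y, hy, h⟩ | ⟨y, hy, h⟩) <;> obtain ⟨n, hn⟩ := Set.mem_iUnion.mp hy
  exacts [hstep n (.inl ⟨y, hn, h⟩), hstep n (.inr ⟨y, hn, h⟩)]

theorem closure_subset_of_closureStep_subset {M : Set E} (hM : A.closureStep M ⊆ M) :
    A.closure M ⊆ M := by
  refine Set.iUnion_subset fun n => ?_
  induction n with
  | zero => exact subset_rfl
  | succ n ih =>
    rw [closureSeq, Function.iterate_succ_apply']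
    exact (closureStep_mono ih).trans hM

section Families

variable {ι : Type*} {c : ι → E} {X : Set E}

/-- The elements that are sums of finite subfamilies of `c`. -/
def subsums (A : EffectAlgebra E) (c : ι → E) : Set E :=
  {a | ∃ S : Finset ι, ∑ i ∈ S, A.of (c i) = A.of a}

/-- A finite family of elements of `X` whose sum is defined. -/
structure OrthogonalIn [Fintype ι] (A : EffectAlgebra E) (X : Set E) (c : ι → E) : Prop where
  mem : ∀ i, c i ∈ X
  defined : (∑ i, A.of (c i)).Defined

/-- The family `d` splits every member of `c` into two summands. Refining a family always in this
way keeps the index sets explicit: `S` becomes `S ×ˢ univ`. -/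
def IsSplitting (A : EffectAlgebra E) (c : ι → E) (d : ι × Bool → E) : Prop :=
  ∀ i, A.of (d (i, true)) + A.of (d (i, false)) = A.of (c i)

theorem OrthogonalIn.mono [Fintype ι] {Y : Set E} (hc : A.OrthogonalIn X c) (hXY : X ⊆ Y) :
    A.OrthogonalIn Y c :=
  ⟨fun i => hXY (hc.mem i), hc.defined⟩

theorem OrthogonalIn.defined_sum [Fintype ι] (hc : A.OrthogonalIn X c) (S : Finset ι) :
    (∑ i ∈ S, A.of (c i)).Defined :=
  hc.defined.sum_of_subset S.subset_univ

namespace IsSplitting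

variable {d : ι × Bool → E}

theorem sum_product_univ (hd : A.IsSplitting c d) (S : Finset ι) :
    ∑ p ∈ S ×ˢ Finset.univ, A.of (d p) = ∑ i ∈ S, A.of (c i) := by
  simp only [Finset.sum_product, Fintype.sum_bool, hd _]

theorem subsums_subset (hd : A.IsSplitting c d) : A.subsums c ⊆ A.subsums d :=
  fun _ ⟨S, hS⟩ => ⟨S ×ˢ Finset.univ, (hd.sum_product_univ S).trans hS⟩

theorem orthogonalIn [Fintype ι] (hd : A.IsSplitting c d) (hc : A.OrthogonalIn X c)
    (hX : ∀ p, d p ∈ X) : A.OrthogonalIn X d := by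
  refine ⟨hX, ?_⟩
  rw [← Finset.univ_product_univ, hd.sum_product_univ]
  exact hc.defined

end IsSplitting

theorem Homogeneous.exists_summand_family (hA : A.Homogeneous) (c : ι → E) (T : Finset ι) {q : E}
    {r : A.Ext} (hq : A.of q + r = ∑ i ∈ T, A.of (c i))
    (hdef : (A.of q + ∑ i ∈ T, A.of (c i)).Defined) :
    ∃ d e : ι → E, (∀ i, A.of (d i) + A.of (e i) = A.of (c i)) ∧
      (∀ i, (A.of (d i) + A.of (c i)).Defined) ∧ ∑ i ∈ T, A.of (d i) = A.of q := by
  classical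
  induction T using Finset.induction_on generalizing q r with
  | empty =>
    refine ⟨fun _ => A.zero, c, fun i => ?_, fun i => ?_, ?_⟩
    · rw [of_zero, zero_add]
    · rw [of_zero, zero_add]
      exact defined_of _
    · rw [Finset.sum_empty] at hq ⊢
      exact (Ext.eq_zero_of_add_eq_zero hq).symm
  | insert i T hi ih =>
    rw [Finset.sum_insert hi] at hq hdef
    obtain ⟨m, hm⟩ := hdef.of_add_left.of_add_left
    obtain ⟨s, hs⟩ := hdef.of_add_left
    rw [← hs] at hq
    have hcm : A.of (c i) + A.of m = A.of s := hm ▸ hs.symm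
    obtain ⟨q₁, q₂, ⟨e₁, hq₁⟩, ⟨e₂, hq₂⟩, hq₁₂⟩ :=
      hA q (c i) m s hcm (le_of_of_add_eq hq) (le_compl_iff_defined.mpr (hs ▸ hdef))
    rw [oplus_eq_some_iff] at hq₁ hq₂ hq₁₂
    rw [← hq₁₂, add_add_add_comm] at hdef
    obtain ⟨d, e, hde, hdc, hsum⟩ := ih (hq₂.trans hm) hdef.of_add_left
    refine ⟨Function.update d i q₁, Function.update e i e₁, fun j => ?_, fun j => ?_, ?_⟩
    · obtain rfl | hj := eq_or_ne j i
      · simpa using hq₁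
      · simpa [hj] using hde j
    · obtain rfl | hj := eq_or_ne j i
      · simpa using hdef.of_add_right
      · simpa [hj] using hdc j
    · rw [Finset.sum_insert hi, Function.update_self, ← hq₁₂, ← hsum]
      congr 1
      exact Finset.sum_congr rfl fun j hj => by
        rw [Function.update_of_ne (ne_of_mem_of_not_mem hj hi)]

theorem Homogeneous.exists_isSplitting (hA : A.Homogeneous) (hX : A.closureStep X ⊆ X)
    (hc : ∀ i, c i ∈ X) {T : Finset ι} {q : E} {r : A.Ext}
    (hq : A.of q + r = ∑ i ∈ T, A.of (c i))
    (hdef : (A.of q + ∑ i ∈ T, A.of (c i)).Defined) :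
    ∃ d : ι × Bool → E, A.IsSplitting c d ∧ (∀ p, d p ∈ X) ∧
      ∑ p ∈ T ×ˢ {true}, A.of (d p) = A.of q := by
  obtain ⟨d, e, hde, hdc, hsum⟩ := hA.exists_summand_family c T hq hdef
  have hmem (i : ι) : d i ∈ X ∧ e i ∈ X :=
    mem_and_mem_of_closureStep_subset hX (hc i) (hde i) (hdc i)
  refine ⟨fun p => bif p.2 then d p.1 else e p.1, hde, ?_, ?_⟩
  · rintro ⟨i, _ | _⟩
    exacts [(hmem i).2, (hmem i).1]
  · simpa only [Finset.sum_product, Finset.sum_singleton, cond_true] using hsum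

theorem OrthogonalIn.exists_isSplitting_subset [Fintype ι] (hc : A.OrthogonalIn X c)
    (hA : A.Homogeneous) (hX : A.closureStep X ⊆ X) {S T : Finset ι} {r : A.Ext}
    (h : ∑ i ∈ S, A.of (c i) + r = ∑ i ∈ T, A.of (c i)) :
    ∃ d : ι × Bool → E, A.IsSplitting c d ∧ (∀ p, d p ∈ X) ∧
      ∃ S' ⊆ T ×ˢ Finset.univ, ∑ p ∈ S', A.of (d p) = ∑ i ∈ S, A.of (c i) := by
  classical
  have hS : ∑ i ∈ S ∩ T, A.of (c i) + ∑ i ∈ S \ T, A.of (c i) = ∑ i ∈ S, A.of (c i) :=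
    Finset.sum_inter_add_sum_sdiff S T _
  have hT : ∑ i ∈ S ∩ T, A.of (c i) + ∑ i ∈ T \ S, A.of (c i) = ∑ i ∈ T, A.of (c i) :=
    Finset.inter_comm T S ▸ Finset.sum_inter_add_sum_sdiff T S _
  obtain ⟨q, hq⟩ := hc.defined_sum (S \ T)
  have hq_le : A.of q + r = ∑ i ∈ T \ S, A.of (c i) := by
    refine (Ext.add_left_cancel_of_defined (hT ▸ hc.defined_sum T) ?_).symm
    rw [hT, hq, ← add_assoc, hS, h]
  have hq_perp : (A.of q + ∑ i ∈ T \ S, A.of (c i)).Defined := by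
    rw [hq, ← Finset.sum_union disjoint_sdiff_sdiff]
    exact hc.defined_sum _
  obtain ⟨d, hd, hdX, hdq⟩ := hA.exists_isSplitting hX hc.mem hq_le hq_perp
  refine ⟨d, hd, hdX, (S ∩ T) ×ˢ Finset.univ ∪ (T \ S) ×ˢ {true}, ?_, ?_⟩
  · exact Finset.union_subset
      (Finset.product_subset_product_left Finset.inter_subset_right)
      (Finset.product_subset_product Finset.sdiff_subset (Finset.subset_univ _))
  · have hdisj : Disjoint (S ∩ T) (T \ S) :=
      Finset.disjoint_sdiff.mono_left Finset.inter_subset_left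
    rw [Finset.sum_union (Finset.disjoint_product.mpr (.inl hdisj)), hd.sum_product_univ, hdq, hq,
      hS]

theorem OrthogonalIn.exists_refinement_subset_subset [Fintype ι] (hc : A.OrthogonalIn X c)
    (hA : A.Homogeneous) (hX : A.closureStep X ⊆ X) {u v s : E} (hu : u ∈ A.subsums c)
    (hv : v ∈ A.subsums c) (hs : s ∈ A.subsums c) (hus : A.le u s) (hvs : A.le v s) :
    ∃ d : (ι × Bool) × Bool → E, A.OrthogonalIn X d ∧ ∃ U V S, U ⊆ S ∧ V ⊆ S ∧
      ∑ p ∈ U, A.of (d p) = A.of u ∧ ∑ p ∈ V, A.of (d p) = A.of v ∧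
      ∑ p ∈ S, A.of (d p) = A.of s := by
  obtain ⟨U, hU⟩ := hu
  obtain ⟨V, hV⟩ := hv
  obtain ⟨S, hS⟩ := hs
  obtain ⟨x, hux⟩ := hus
  obtain ⟨y, hvy⟩ := hvs
  rw [oplus_eq_some_iff] at hux hvy
  obtain ⟨c₁, hsplit₁, hc₁X, U₁, hU₁S, hU₁⟩ :=
    hc.exists_isSplitting_subset hA hX (hU ▸ hS ▸ hux)
  have hV₁ := (hsplit₁.sum_product_univ V).trans hV
  have hS₁ := (hsplit₁.sum_product_univ S).trans hS
  have hc₁ := hsplit₁.orthogonalIn hc hc₁X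
  obtain ⟨c₂, hsplit₂, hc₂X, V₂, hV₂S, hV₂⟩ :=
    hc₁.exists_isSplitting_subset hA hX (hV₁ ▸ hS₁ ▸ hvy)
  refine ⟨c₂, hsplit₂.orthogonalIn hc₁ hc₂X, U₁ ×ˢ Finset.univ, V₂,
    (S ×ˢ Finset.univ) ×ˢ Finset.univ, Finset.product_subset_product_left hU₁S, hV₂S, ?_, ?_, ?_⟩
  · rw [hsplit₂.sum_product_univ, hU₁, hU]
  · rw [hV₂, hV₁]
  · rw [hsplit₂.sum_product_univ, hS₁]

end Families

theorem sumList_eq_sum_map (L : List E) : A.sumList L = (L.map A.of).sum := by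
  induction L with
  | nil => rfl
  | cons a L ih => rw [sumList, ih, List.map_cons, List.sum_cons]; rfl

theorem sumList_pickList (C : List E) (S : Finset (Fin C.length)) :
    A.sumList (pickList C S) = ∑ i ∈ S, A.of (C.get i) := by
  rw [sumList_eq_sum_map, pickList, List.map_map,
    ((S.sort_perm_toList (· ≤ ·)).map _).sum_eq, Finset.sum_map_toList]
  rfl

theorem isCoverOf_iff {C : List E} {M : Set E} :
    A.IsCoverOf C M ↔ (∑ i, A.of (C.get i)).Defined ∧ M ⊆ A.subsums C.get := by
  have hsum : A.sumList C = ∑ i, A.of (C.get i) := by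
    rw [sumList_eq_sum_map, ← Fin.sum_univ_fun_getElem]
    rfl
  refine and_congr ?_ (forall₂_congr fun a _ => exists_congr fun S => ?_)
  · rw [← hsum, Option.isSome_iff_exists]
    exact exists_congr fun _ => eq_comm
  · rw [sumList_pickList]
    rfl

theorem CompatWithCoversIn.mono_right {M X Y : Set E} (h : A.CompatWithCoversIn M X)
    (hXY : X ⊆ Y) : A.CompatWithCoversIn M Y := fun F hF =>
  (h F hF).imp fun _ hC => ⟨fun a ha => hXY (hC.1 a ha), hC.2⟩

theorem CompatWithCoversIn.exists_orthogonalIn {M X : Set E} (h : A.CompatWithCoversIn M X)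
    {F : Finset E} (hF : ↑F ⊆ M) :
    ∃ (n : ℕ) (c : Fin n → E), A.OrthogonalIn X c ∧ ↑F ⊆ A.subsums c := by
  obtain ⟨C, hCX, hC⟩ := h F hF
  obtain ⟨hdef, hsub⟩ := isCoverOf_iff.mp hC
  exact ⟨C.length, C.get, ⟨fun i => hCX _ (C.get_mem i), hdef⟩, hsub⟩

theorem OrthogonalIn.exists_isCoverOf {ι : Type*} [Fintype ι] {c : ι → E} {M X : Set E}
    (hc : A.OrthogonalIn X c) (hM : M ⊆ A.subsums c) :
    ∃ C : List E, (∀ a ∈ C, a ∈ X) ∧ A.IsCoverOf C M := by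
  let f : Fin (Fintype.card ι) → E := c ∘ (Fintype.equivFin ι).symm
  let e : Fin (List.ofFn f).length ≃ ι :=
    (finCongr List.length_ofFn).trans (Fintype.equivFin ι).symm
  have hget : (List.ofFn f).get = c ∘ e := funext (List.get_ofFn f)
  refine ⟨List.ofFn f, ?_, isCoverOf_iff.mpr ⟨?_, fun a ha => ?_⟩⟩
  · exact List.forall_mem_ofFn_iff.mpr fun _ => hc.mem _
  · rw [hget]
    exact (e.sum_comp fun i => A.of (c i)).symm ▸ hc.defined
  · obtain ⟨S, hS⟩ := hM ha
    refine ⟨S.map e.symm.toEmbedding, ?_⟩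
    rw [Finset.sum_map, hget]
    simpa using hS

/-- `M` is compatible with covers in its own closure. Maximal sets of this kind containing `1` turn
out to be sub-effect algebras with the Riesz decomposition property. -/
def CompatInClosure (A : EffectAlgebra E) (M : Set E) : Prop :=
  A.CompatWithCoversIn M (A.closure M)

theorem compatInClosure_self_compl_one (A : EffectAlgebra E) (x : E) :
    A.CompatInClosure {x, A.compl x, A.one} := by
  intro F hF
  have hsum : A.of x + A.of (A.compl x) = A.of A.one := A.of_add_of_compl x
  refine OrthogonalIn.exists_isCoverOf (c := fun b => bif b then x else A.compl x)
    ⟨fun b => subset_closure _ ?_, A.one, ?_⟩ (hF.trans ?_)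
  · cases b <;> simp
  · simp [hsum]
  · rintro a (rfl | rfl | rfl)
    exacts [⟨{true}, by simp⟩, ⟨{false}, by simp⟩, ⟨Finset.univ, by simp [hsum]⟩]

theorem compatInClosure_sUnion {K : Set (Set E)} (hK : IsChain (· ⊆ ·) K) (hne : K.Nonempty)
    (h : ∀ M ∈ K, A.CompatInClosure M) : A.CompatInClosure (⋃₀ K) := by
  intro F hF
  obtain ⟨M, hM, hFM⟩ := DirectedOn.exists_mem_subset_of_finite_of_subset_sUnion hne
    hK.directedOn F.finite_toSet hF
  exact (h M hM).mono_right (closure_mono (Set.subset_sUnion_of_mem hM)) F hFM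

theorem CompatInClosure.exists_maximal_superset {M : Set E} (hM : A.CompatInClosure M) :
    ∃ N, M ⊆ N ∧ Maximal A.CompatInClosure N :=
  zorn_subset_nonempty {N | A.CompatInClosure N}
    (fun K hK hchain hne => ⟨⋃₀ K, compatInClosure_sUnion hchain hne hK,
      fun _ => Set.subset_sUnion_of_mem⟩) M hM

section Maximal

variable {M : Set E}

theorem mem_of_maximal_compatInClosure (hM : Maximal A.CompatInClosure M) {F : Finset E}
    (hF : ↑F ⊆ M) {x : E}
    (hx : ∀ (n : ℕ) (c : Fin n → E), A.OrthogonalIn (A.closure M) c → ↑F ⊆ A.subsums c →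
      ∃ d, A.IsSplitting c d ∧ (∀ p, d p ∈ A.closure M) ∧ x ∈ A.subsums d) :
    x ∈ M := by
  classical
  suffices hinsert : A.CompatInClosure (insert x M) from
    hM.le_of_ge hinsert (Set.subset_insert x M) (Set.mem_insert x M)
  intro G hG
  have hGM : ↑(G.erase x ∪ F) ⊆ M := by
    rw [Finset.coe_union, Finset.coe_erase]
    exact Set.union_subset (Set.sdiff_singleton_subset_iff.mpr hG) hF
  obtain ⟨n, c, hc, hGc⟩ := hM.prop.exists_orthogonalIn hGM
  rw [Finset.coe_union, Set.union_subset_iff, Finset.coe_erase] at hGc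
  obtain ⟨d, hd, hdM, hxd⟩ := hx n c hc hGc.2
  refine ((hd.orthogonalIn hc hdM).mono (closure_mono (Set.subset_insert x M))).exists_isCoverOf ?_
  exact (Set.sdiff_singleton_subset_iff.mp (hGc.1.trans hd.subsums_subset)).trans
    (Set.insert_subset hxd subset_rfl)

theorem isSubEA_of_maximal_compatInClosure (hA : A.Homogeneous)
    (hM : Maximal A.CompatInClosure M) (hone : A.one ∈ M) : A.IsSubEA M := by
  classical
  refine ⟨hone, ?_⟩
  rintro a ha b hb ⟨d, hd⟩
  rw [ominus_eq hd]
  rw [oplus_eq_some_iff] at hd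
  refine mem_of_maximal_compatInClosure hM (F := {a, b})
    (by simp [Set.insert_subset_iff, ha, hb]) fun n c hc habc => ?_
  obtain ⟨T, hT⟩ := habc (show a ∈ _ by simp)
  obtain ⟨S, hS⟩ := habc (show b ∈ _ by simp)
  obtain ⟨c₁, hc₁, hc₁M, S₁, hS₁T, hS₁⟩ := hc.exists_isSplitting_subset hA
    (closureStep_closure_subset M) (S := S) (T := T) (r := A.of d) (by rw [hS, hT, hd])
  refine ⟨c₁, hc₁, hc₁M, (T ×ˢ Finset.univ) \ S₁, ?_⟩
  refine Ext.sum_sdiff_eq_of_sum_add_eq hS₁T ?_ ?_ <;> rw [hc₁.sum_product_univ]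
  · exact hc.defined_sum T
  · rw [hS₁, hS, hd, hT]

theorem closureStep_subset_of_maximal_compatInClosure (hA : A.Homogeneous)
    (hM : Maximal A.CompatInClosure M) (hsub : A.IsSubEA M) : A.closureStep M ⊆ M := by
  have mem_of_le {x y : E} (hy : y ∈ M) (hxy : A.le x y) (hxy' : A.le x (A.compl y)) : x ∈ M := by
    obtain ⟨z, hz⟩ := hxy
    rw [oplus_eq_some_iff] at hz
    rw [le_compl_iff_defined] at hxy'
    refine mem_of_maximal_compatInClosure hM (F := {y}) (by simpa using hy) fun n c hc hyc => ?_
    obtain ⟨T, hT⟩ := hyc (Finset.mem_singleton_self y)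
    rw [← hT] at hz hxy'
    obtain ⟨d, hd, hdM, hsum⟩ :=
      hA.exists_isSplitting (closureStep_closure_subset M) hc.mem hz hxy'
    exact ⟨d, hd, hdM, _, hsum⟩
  rintro z (⟨y, hy, hzy, hzy'⟩ | ⟨y, hy, x, hxy, hxy', hxz⟩)
  · exact mem_of_le hy hzy hzy'
  · exact hsub.mem_of_add_eq hy (mem_of_le hy hxy hxy') hxz

end Maximal

theorem InternallyCompatible.rdpOn {M : Set E} (hM : A.InternallyCompatible M)
    (hA : A.Homogeneous) (hsub : A.IsSubEA M) (hstep : A.closureStep M ⊆ M) : A.RDPOn M := by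
  classical
  intro u v₁ v₂ s hu hv₁ hv₂ hs hus
  have hsM : s ∈ M := hsub.add_mem hv₁ hv₂ hs
  obtain ⟨n, c, hc, hcover⟩ := hM.exists_orthogonalIn (F := {u, v₁, s})
    (by simp [Set.insert_subset_iff, hu, hv₁, hsM])
  simp only [Finset.coe_insert, Finset.coe_singleton, Set.insert_subset_iff,
    Set.singleton_subset_iff] at hcover
  obtain ⟨d, hd, U, V, S, hUS, hVS, hU, hV, hS⟩ :=
    hc.exists_refinement_subset_subset hA hstep hcover.1 hcover.2.1 hcover.2.2 hus ⟨v₂, hs⟩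
  have hSV : ∑ p ∈ S \ V, A.of (d p) = A.of v₂ :=
    Ext.sum_sdiff_eq_of_sum_add_eq hVS (hd.defined_sum S) (hV ▸ hS ▸ hs)
  obtain ⟨u₁, hu₁⟩ := hd.defined_sum (U ∩ V)
  obtain ⟨u₂, hu₂⟩ := hd.defined_sum (U \ V)
  refine ⟨u₁, u₂, hsub.sum_mem hd.mem _ hu₁.symm, hsub.sum_mem hd.mem _ hu₂.symm,
    le_of_sum_subset Finset.inter_subset_right hu₁.symm hV,
    le_of_sum_subset (Finset.sdiff_subset_sdiff hUS subset_rfl) hu₂.symm hSV, ?_⟩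
  rw [oplus_eq_some_iff, hu₁, hu₂, Finset.sum_inter_add_sum_sdiff, hU]

theorem Homogeneous.exists_isSubEA_rdpOn (hA : A.Homogeneous) (x : E) :
    ∃ B, A.IsSubEA B ∧ A.RDPOn B ∧ x ∈ B := by
  obtain ⟨M, hxM, hM⟩ := (A.compatInClosure_self_compl_one x).exists_maximal_superset
  have hsub : A.IsSubEA M := isSubEA_of_maximal_compatInClosure hA hM (hxM (by simp))
  have hstep : A.closureStep M ⊆ M := closureStep_subset_of_maximal_compatInClosure hA hM hsub
  have hint : A.InternallyCompatible M :=
    hM.prop.mono_right (closure_subset_of_closureStep_subset hstep)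
  exact ⟨M, hsub, hint.rdpOn hA hsub hstep, hxM (by simp)⟩

section Chain

variable {K : Set (Set E)}

theorem isSubEA_sUnion (hK : IsChain (· ⊆ ·) K) (hne : K.Nonempty) (h : ∀ B ∈ K, A.IsSubEA B) :
    A.IsSubEA (⋃₀ K) := by
  refine ⟨hne.imp fun B hB => ⟨hB, (h B hB).1⟩, fun a ha b hb hba => ?_⟩
  obtain ⟨B, hB, habB⟩ := DirectedOn.exists_mem_subset_of_finite_of_subset_sUnion hne
    hK.directedOn (Set.toFinite {a, b}) (Set.pair_subset ha hb)
  exact ⟨B, hB, (h B hB).2 a (habB (by simp)) b (habB (by simp)) hba⟩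

theorem rdpOn_sUnion (hK : IsChain (· ⊆ ·) K) (hne : K.Nonempty) (h : ∀ B ∈ K, A.RDPOn B) :
    A.RDPOn (⋃₀ K) := by
  intro u v₁ v₂ s hu hv₁ hv₂ hs hus
  obtain ⟨B, hB, hsubB⟩ := DirectedOn.exists_mem_subset_of_finite_of_subset_sUnion hne
    hK.directedOn (Set.toFinite {u, v₁, v₂}) (Set.insert_subset hu (Set.pair_subset hv₁ hv₂))
  obtain ⟨u₁, u₂, hu₁, hu₂, hsplit⟩ := h B hB u v₁ v₂ s (hsubB (by simp)) (hsubB (by simp))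
    (hsubB (by simp)) hs hus
  exact ⟨u₁, u₂, ⟨B, hB, hu₁⟩, ⟨B, hB, hu₂⟩, hsplit⟩

end Chain

theorem IsSubEA.exists_isBlock_superset {B : Set E} (hB : A.IsSubEA B) (hrdp : A.RDPOn B) :
    ∃ B', A.IsBlock B' ∧ B ⊆ B' := by
  obtain ⟨B', hBB', hB'⟩ := zorn_subset_nonempty {B | A.IsSubEA B ∧ A.RDPOn B}
    (fun K hK hchain hne => ⟨⋃₀ K,
      ⟨isSubEA_sUnion hchain hne fun _ hC => (hK hC).1,
        rdpOn_sUnion hchain hne fun _ hC => (hK hC).2⟩,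
      fun _ => Set.subset_sUnion_of_mem⟩) B ⟨hB, hrdp⟩
  exact ⟨B', ⟨hB'.prop.1, hB'.prop.2, fun C hC hCrdp hB'C =>
    (hB'.eq_of_subset ⟨hC, hCrdp⟩ hB'C).symm⟩, hBB'⟩

end EffectAlgebra

/-- A homogeneous effect algebra is the union of its blocks. -/
theorem union_of_blocks {E : Type*} (A : EffectAlgebra E)
    (hH : A.Homogeneous) :
    ∀ x : E, ∃ B : Set E, A.IsBlock B ∧ x ∈ B := by
  intro x
  obtain ⟨M, hM, hrdp, hxM⟩ := hH.exists_isSubEA_rdpOn x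
  obtain ⟨B, hB, hMB⟩ := hM.exists_isBlock_superset hrdp
  exact ⟨B, hB, hMB hxM⟩
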